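/- Assume W + c₁ < w. Let T > 0, b₀ ∈ [0, 1], and 0 ≤ ε₀ ≤ ρ_T(b₀). Then Γ₁(b₀, ε₀) ≥ min{Γ₁(1, 1), T} (as elements of [0, ∞]). -/

import Mathlib

/-!
Suppose `τ < T` belongs to the set defining `Γ₁(b₀, ε₀)`; a time `σ ≤ τ` in the set defining
`Γ₁(1, 1)` is needed. The bound `ε₀ ≤ ρ_T(b₀)` is exactly what makes
`b̃(τ, b₀, ε₀) ≤ b̃(τ, 1, 1)` on `[0, T]` (`btilde_le_btilde_one_one`), so `b̃(τ, 1, 1) ≥ 1`. Since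
`b̃(0, 1, 1) = 1` and, by `W + c₁ < w`, the derivative there is negative (`hasDerivAt_btilde_zero`),
`b̃(·, 1, 1)` drops below `1` and must climb back to it by time `τ`; at the first return its
derivative is nonnegative (`exists_upcrossing`). The remaining case `τ = 0` is void, since it forces
`b₀ = 1`, hence `ε₀ ≤ 1`, and then the derivative at `0` is negative.
-/

open Real ENNReal

noncomputable def f₁ (w θ η W c₁ c₂ τ b₀ ε₀ : ℝ) : ℝ :=
  b₀ + W * ε₀ / (w + θ) * (Real.exp ((w + θ) * τ) - 1) +
    (c₁ - c₂) / w * (Real.exp (w * τ) - 1) +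
    c₂ / (w + η) * (Real.exp ((w + η) * τ) - 1)

noncomputable def f₂ (w τ : ℝ) : ℝ := Real.exp (w * τ)

/-- The comparison function `b̃` of Lemma 1. -/
noncomputable def btilde (w θ η W c₁ c₂ τ b₀ ε₀ : ℝ) : ℝ :=
  f₁ w θ η W c₁ c₂ τ b₀ ε₀ / f₂ w τ

/-- `Γ₁(b₀, ε₀)`: the infimum in `[0, ∞]` of the set
`{τ ≥ 0 : b̃(τ, b₀, ε₀) = 1 and (∂/∂τ)b̃(τ, b₀, ε₀) ≥ 0}` (`∞` if the set is empty). -/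
noncomputable def Γ₁ (w θ η W c₁ c₂ b₀ ε₀ : ℝ) : ℝ≥0∞ :=
  sInf {x : ℝ≥0∞ | ∃ τ : ℝ, 0 ≤ τ ∧ x = ENNReal.ofReal τ ∧
    btilde w θ η W c₁ c₂ τ b₀ ε₀ = 1 ∧
    0 ≤ deriv (fun s => btilde w θ η W c₁ c₂ s b₀ ε₀) τ}

/-- The threshold function `ρ_T` of Lemma 2(iii). -/
noncomputable def ρ (w θ W T y : ℝ) : ℝ :=
  (w + θ) * (1 - y) / (W * (Real.exp ((w + θ) * T) - 1)) + 1

/-- A function that starts at level `1` with negative slope and is at level at least `1` at time `τ`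
hits level `1` with nonnegative slope at some time in `[0, τ]`. -/
lemma exists_upcrossing {h : ℝ → ℝ} {d τ : ℝ} (hd : Differentiable ℝ h) (h0 : h 0 = 1)
    (h0' : HasDerivAt h d 0) (hneg : d < 0) (hτ : 0 < τ) (h1 : 1 ≤ h τ) :
    ∃ σ, 0 ≤ σ ∧ σ ≤ τ ∧ h σ = 1 ∧ 0 ≤ deriv h σ := by
  obtain ⟨m, hm0, hmτ, hm⟩ : ∃ m, 0 < m ∧ m < τ ∧ h m < 1 := by
    have ht := (hasDerivAt_iff_tendsto_slope.mp h0').mono_left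
      (nhdsWithin_mono (0 : ℝ) (fun x (hx : x ∈ Set.Ioi 0) => ne_of_gt hx))
    have he := ht.eventually (gt_mem_nhds hneg)
    obtain ⟨m, hs, hm⟩ := (he.and (Ioo_mem_nhdsGT hτ)).exists
    refine ⟨m, hm.1, hm.2, ?_⟩
    rw [slope_def_field, h0, sub_zero, div_neg_iff] at hs
    rcases hs with hs | hs <;> linarith [hm.1]
  -- `σ` is the first time after `m` at which `h` is at least `1`.
  have hK : IsCompact (Set.Icc m τ ∩ {s | 1 ≤ h s}) :=
    isCompact_Icc.inter_right (isClosed_le continuous_const hd.continuous)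
  obtain ⟨σ, ⟨⟨hmσ, hστ⟩, hσ⟩, hmin⟩ := hK.exists_isLeast ⟨τ, ⟨hmτ.le, le_rfl⟩, h1⟩
  have hσ : 1 ≤ h σ := hσ
  have hlt : ∀ s, m ≤ s → s < σ → h s < 1 := by
    intro s hs hsσ
    by_contra hcon
    exact absurd (hmin ⟨⟨hs, by linarith⟩, not_lt.mp hcon⟩) (not_le.mpr hsσ)
  have hmσ' : m < σ := lt_of_le_of_ne hmσ (by rintro rfl; linarith)
  have hσ1 : h σ = 1 := by
    obtain ⟨s, hs, hs1⟩ := intermediate_value_Icc hmσ hd.continuous.continuousOn ⟨hm.le, hσ⟩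
    rcases hs.2.lt_or_eq with hlt' | rfl
    · linarith [hlt s hs.1 hlt']
    · exact hs1
  refine ⟨σ, by linarith, hστ, hσ1, ?_⟩
  -- Left difference quotients at `σ` are nonnegative.
  have ht := (hasDerivAt_iff_tendsto_slope.mp (hd σ).hasDerivAt).mono_left
    (nhdsWithin_mono σ (fun x (hx : x ∈ Set.Iio σ) => ne_of_lt hx))
  refine ge_of_tendsto ht ?_
  filter_upwards [Ioo_mem_nhdsLT hmσ'] with s hs
  rw [slope_def_field]
  exact div_nonneg_of_nonpos (by linarith [hlt s hs.1.le hs.2]) (by linarith [hs.2])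

lemma differentiable_btilde (w θ η W c₁ c₂ b₀ ε₀ : ℝ) :
    Differentiable ℝ (fun s => btilde w θ η W c₁ c₂ s b₀ ε₀) := by
  unfold btilde f₁ f₂
  exact Differentiable.div (by fun_prop) (by fun_prop) (fun s => (Real.exp_pos _).ne')

lemma hasDerivAt_btilde_zero (w θ η W c₁ c₂ b₀ ε₀ : ℝ) (hw : 0 < w) (hθ : 0 < θ) (hη : 0 < η) :
    HasDerivAt (fun s => btilde w θ η W c₁ c₂ s b₀ ε₀) (W * ε₀ + c₁ - w * b₀) 0 := by
  have he : ∀ a : ℝ, HasDerivAt (fun s : ℝ => Real.exp (a * s)) a 0 := by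
    intro a
    simpa using ((hasDerivAt_id (0 : ℝ)).const_mul a).exp
  have h1 : HasDerivAt (fun s => f₁ w θ η W c₁ c₂ s b₀ ε₀) (W * ε₀ / (w + θ) * (w + θ) +
      (c₁ - c₂) / w * w + c₂ / (w + η) * (w + η)) 0 := by
    unfold f₁
    exact (((((he (w + θ)).sub_const 1).const_mul _).const_add b₀).add
      (((he w).sub_const 1).const_mul _)).add (((he (w + η)).sub_const 1).const_mul _)
  have h := h1.fun_div (he w) (Real.exp_pos _).ne'
  refine h.congr_deriv ?_
  have h3 : w + θ ≠ 0 := by positivity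
  have h4 : w + η ≠ 0 := by positivity
  simp only [f₁, mul_zero, Real.exp_zero, sub_self, div_mul_cancel₀ _ h3, div_mul_cancel₀ _ h4,
    div_mul_cancel₀ _ hw.ne']
  ring

lemma btilde_zero (w θ η W c₁ c₂ b₀ ε₀ : ℝ) : btilde w θ η W c₁ c₂ 0 b₀ ε₀ = b₀ := by
  simp [btilde, f₁, f₂]

/-- Up to time `T`, the loss from `ε₀ > 1` is at most the gain from `b₀ ≤ 1`: the threshold `ρ_T`
balances the two exactly at time `T`. -/
lemma btilde_le_btilde_one_one (w θ η W c₁ c₂ T τ b₀ ε₀ : ℝ) (hw : 0 < w) (hθ : 0 < θ)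
    (hW : 0 < W) (hτ : 0 ≤ τ) (hτT : τ ≤ T) (hT : 0 < T) (hb : b₀ ≤ 1)
    (hε : ε₀ ≤ ρ w θ W T b₀) :
    btilde w θ η W c₁ c₂ τ b₀ ε₀ ≤ btilde w θ η W c₁ c₂ τ 1 1 := by
  have hk : 0 < w + θ := by positivity
  have hE : 0 < Real.exp ((w + θ) * T) - 1 := by
    linarith [Real.add_one_lt_exp (mul_pos hk hT).ne', mul_pos hk hT]
  have he0 : 0 ≤ Real.exp ((w + θ) * τ) - 1 := by
    linarith [Real.add_one_le_exp ((w + θ) * τ), mul_nonneg hk.le hτ]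
  have heE : Real.exp ((w + θ) * τ) - 1 ≤ Real.exp ((w + θ) * T) - 1 := by gcongr
  unfold btilde f₂ f₁
  unfold ρ at hε
  gcongr ?_ / _
  generalize Real.exp ((w + θ) * T) - 1 = E at *
  generalize Real.exp ((w + θ) * τ) - 1 = e at *
  have key : W * (ε₀ - 1) / (w + θ) * e ≤ 1 - b₀ := by
    calc W * (ε₀ - 1) / (w + θ) * e
        ≤ W * ((w + θ) * (1 - b₀) / (W * E)) / (w + θ) * e := by gcongr; linarith
      _ = (1 - b₀) * (e / E) := by field_simp
      _ ≤ (1 - b₀) * 1 := by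
          have : e / E ≤ 1 := (div_le_one hE).mpr heE
          exact mul_le_mul_of_nonneg_left this (by linarith)
      _ = 1 - b₀ := mul_one _
  have : W * (ε₀ - 1) / (w + θ) * e = W * ε₀ / (w + θ) * e - W * 1 / (w + θ) * e := by ring
  linarith

/-- Lemma 2(iii): if `ε₀ ≤ ρ_T(b₀)` then `Γ₁(b₀, ε₀) ≥ min {Γ₁(1,1), T}`. -/
theorem stmt_10 (w θ η W c₁ c₂ : ℝ) (hw : 0 < w) (hθ : 0 < θ) (hη : 0 < η)
    (hW : 0 < W) (hc₁ : 0 ≤ c₁) (hc₂ : 0 ≤ c₂) (hWc : W + c₁ < w)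
    (T : ℝ) (hT : 0 < T) (b₀ ε₀ : ℝ) (hb₀ : b₀ ∈ Set.Icc (0 : ℝ) 1)
    (hε₀ : 0 ≤ ε₀) (hε₀ρ : ε₀ ≤ ρ w θ W T b₀) :
    min (Γ₁ w θ η W c₁ c₂ 1 1) (ENNReal.ofReal T) ≤ Γ₁ w θ η W c₁ c₂ b₀ ε₀ := by
  refine le_sInf ?_
  rintro _ ⟨τ, hτ, rfl, hb1, hder⟩
  rcases le_or_gt T τ with hTτ | hτT
  · exact (min_le_right _ _).trans (ENNReal.ofReal_le_ofReal hTτ)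
  rcases hτ.eq_or_lt with rfl | hτ0
  · exfalso
    rw [btilde_zero] at hb1
    subst hb1
    have hε1 : ε₀ ≤ 1 := by simpa [ρ] using hε₀ρ
    rw [(hasDerivAt_btilde_zero w θ η W c₁ c₂ 1 ε₀ hw hθ hη).deriv] at hder
    nlinarith
  have hle := btilde_le_btilde_one_one w θ η W c₁ c₂ T τ b₀ ε₀ hw hθ hW hτ hτT.le hT hb₀.2 hε₀ρ
  rw [hb1] at hle
  obtain ⟨σ, hσ0, hστ, hσ1, hσd⟩ := exists_upcrossing (differentiable_btilde w θ η W c₁ c₂ 1 1)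
    (btilde_zero w θ η W c₁ c₂ 1 1) (hasDerivAt_btilde_zero w θ η W c₁ c₂ 1 1 hw hθ hη)
    (by linarith) hτ0 hle
  have hΓ : Γ₁ w θ η W c₁ c₂ 1 1 ≤ ENNReal.ofReal σ := sInf_le ⟨σ, hσ0, rfl, hσ1, hσd⟩
  exact (min_le_left _ _).trans (hΓ.trans (ENNReal.ofReal_le_ofReal hστ))
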